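/- arXiv:math/9903052 — 2 statements merged into one kernel-verified Lean document; each statement's English description precedes it below -/
import Mathlib

section
/- (Classical dynamical Yang–Baxter equation, Etingof–Varchenko.) Each function μ ↦ T_{ab}(μ) is differentiable on the open set {μ ∈ 𝔤 : ‖ad_μ‖ < 2π}, and for every μ in this set and all indices a,b,c one has Σ_{cyclic} [ D_μT_{bc}(e_a) + Σ_{r,s} T_{ar}(μ) f_{rbs} T_{sc}(μ) ] = (1/4) f_{abc}, where D_μT_{bc}(e_a) denotes the directional derivative of T_{bc} at μ in the direction e_a, and the sum Σ_{cyclic} runs over the three cyclic permutations (a,b,c), (b,c,a), (c,a,b) of the index triple. -/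
open scoped RealInnerProductSpace

open PowerSeries in
/-- coefficients of `1/s - coth(s/2)/2`. -/
noncomputable def cdCoef (m : ℕ) : ℝ :=
  if Odd m then -(((bernoulli (m + 1) : ℚ) : ℝ) / ((m + 1).factorial : ℝ)) else 0

open PowerSeries in
lemma cd_bern {R : Type*} [CommRing R] [Algebra ℚ R] [Algebra ℝ R] :
    (1 : PowerSeries R) - X * PowerSeries.mk (fun n => algebraMap ℝ R (cdCoef n))
      - C (algebraMap ℝ R (1/2)) * X = bernoulliPowerSeries R := by
  ext n
  have key : ∀ q : ℚ, algebraMap ℚ R q = algebraMap ℝ R (q : ℝ) := by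
    intro q
    have : (algebraMap ℚ R) = (algebraMap ℝ R).comp (algebraMap ℚ ℝ) := Subsingleton.elim _ _
    rw [this]; simp
  rcases n with _ | n
  · simp [bernoulliPowerSeries]
  · simp only [map_sub, bernoulliPowerSeries, coeff_mk, key, coeff_succ_X_mul, coeff_succ_mul_X, coeff_one, coeff_C]
    rcases n with _ | n
    · simp [cdCoef, bernoulli_one]
      rw [← map_neg]; congr 1; norm_num
    · by_cases h : Odd (n+1)
      · simp [cdCoef, h]
      · have h2 : bernoulli (n+1+1) = 0 := bernoulli_eq_zero_of_odd (by grind) (by omega)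
        simp [cdCoef, h, h2]

open PowerSeries in
/-- formal series `f(s t)`. -/
noncomputable def cdF {R : Type*} [CommRing R] [Algebra ℝ R] (s : R) : PowerSeries R :=
  PowerSeries.mk (fun n => algebraMap ℝ R (cdCoef n) * s ^ n)

open PowerSeries in
lemma cd_rel {R : Type*} [CommRing R] [Algebra ℚ R] [Algebra ℝ R] (s : R) :
    (1 - C s * X * cdF s - C (algebraMap ℝ R (1/2)) * (C s * X)) * (rescale s (exp R) - 1)
     = C s * X := by
  have h := congrArg (rescale s) (bernoulliPowerSeries_mul_exp_sub_one R)
  rw [← cd_bern] at h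
  have hF : rescale s (PowerSeries.mk (fun n => algebraMap ℝ R (cdCoef n))) = cdF s := by
    ext n; simp [cdF, mul_comm]
  have hC : ∀ a : R, rescale s (C a) = C a := by
    intro a; ext n; rw [coeff_rescale, coeff_C]; split_ifs with h <;> simp [h]
  simp only [map_mul, map_sub, map_one, hF, rescale_X, hC] at h
  exact h

open PowerSeries in
/-- formal series for the derivative term. -/
noncomputable def cdD {R : Type*} [CommRing R] [Algebra ℝ R] (y z : R) : PowerSeries R :=
  PowerSeries.mk (fun n => - (algebraMap ℝ R (cdCoef (n+1)) *
    ∑ p ∈ Finset.HasAntidiagonal.antidiagonal n, (-y) ^ p.1 * z ^ p.2))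

open PowerSeries in
lemma cd_D {R : Type*} [CommRing R] [Algebra ℝ R] (x y z : R) (h : x + y + z = 0) :
    C x * X * cdD y z = cdF y + cdF z := by
  have hx : x = -y - z := by linear_combination h
  ext n
  rcases n with _ | n
  · simp [cdF, cdCoef, mul_assoc]
  · rw [mul_assoc, coeff_C_mul, coeff_succ_X_mul]
    simp only [cdD, cdF, coeff_mk, map_add]
    have hg := (Commute.all (-y) z).mul_geom_sum₂ (n+1)
    have hg2 := Finset.Nat.sum_antidiagonal_eq_sum_range_succ (fun i j => (-y)^i * z^j) n
    simp only [Nat.add_sub_cancel, Nat.succ_eq_add_one] at hg hg2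
    rw [← hg2] at hg
    by_cases ho : Odd (n+1)
    · rw [ho.neg_pow] at hg
      rw [hx]
      linear_combination (- algebraMap ℝ R (cdCoef (n+1))) * hg
    · simp [cdCoef, ho]

open PowerSeries in
lemma cd_formal {R : Type*} [CommRing R] [IsDomain R] [Algebra ℚ R] [Algebra ℝ R] (x y z : R)
    (h : x + y + z = 0) (hx : x ≠ 0) (hy : y ≠ 0) (hz : z ≠ 0) :
    cdD y z + cdD z x + cdD x y - cdF x * cdF z - cdF y * cdF x - cdF z * cdF y
      = C (algebraMap ℝ R (1/4)) := by
  have rx := cd_rel x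
  have ry := cd_rel y
  have rz := cd_rel z
  have dx := cd_D x y z h
  have dy := cd_D y z x (by linear_combination h)
  have dz := cd_D z x y (by linear_combination h)
  have hE : rescale x (exp R) * rescale y (exp R) * rescale z (exp R) = 1 := by
    rw [exp_mul_exp_eq_exp_add, exp_mul_exp_eq_exp_add, h]; simp
  have hne : ∀ s : R, s ≠ 0 → rescale s (exp R) - 1 ≠ 0 := by
    intro s hs h0
    have := congrArg (coeff 1) h0
    simp [coeff_one] at this
    exact hs this
  have hC : ∀ s : R, s ≠ 0 → (C s * X : PowerSeries R) ≠ 0 := by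
    intro s hs h0
    have := congrArg (coeff 1) h0
    rw [← zero_add 1, coeff_succ_mul_X] at this
    simp at this
    exact hs this
  have hq : C (algebraMap ℝ R (1/2)) * C (algebraMap ℝ R (1/2)) = C (algebraMap ℝ R (1/4)) := by
    rw [← map_mul, ← map_mul]; norm_num
  have h2 : 2 * C (algebraMap ℝ R (1/2)) = 1 := by
    rw [← map_ofNat C 2, ← map_ofNat (algebraMap ℝ R) 2, ← map_mul, ← map_mul]; norm_num
  have hs : (C x * X + C y * X + C z * X : PowerSeries R) = 0 := by
    rw [← add_mul, ← add_mul, ← map_add, ← map_add, h]; simp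
  have nEx := hne x hx
  have nEy := hne y hy
  have nEz := hne z hz
  have nx := hC x hx
  have ny := hC y hy
  have nz := hC z hz
  rw [← hq]
  generalize C (algebraMap ℝ R (1/2)) = k at *
  generalize cdD y z = Dx at *
  generalize cdD z x = Dy at *
  generalize cdD x y = Dz at *
  generalize cdF x = Fx at *
  generalize cdF y = Fy at *
  generalize cdF z = Fz at *
  generalize rescale x (exp R) = Ex at *
  generalize rescale y (exp R) = Ey at *
  generalize rescale z (exp R) = Ez at *
  generalize C x * X = a at *
  generalize C y * X = b at *
  generalize C z * X = c at *
  obtain ⟨p, hp⟩ : ∃ p, p = 1 - a * Fx := ⟨_, rfl⟩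
  obtain ⟨q, hq'⟩ : ∃ p, p = 1 - b * Fy := ⟨_, rfl⟩
  obtain ⟨r, hr⟩ : ∃ p, p = 1 - c * Fz := ⟨_, rfl⟩
  have ex : p * (Ex - 1) = k * a * (Ex + 1) := by
    rw [hp]; linear_combination rx - a * h2
  have ey : q * (Ey - 1) = k * b * (Ey + 1) := by
    rw [hq']; linear_combination ry - b * h2
  have ez : r * (Ez - 1) = k * c * (Ez + 1) := by
    rw [hr]; linear_combination rz - c * h2
  have main : c * p * q + a * q * r + b * r * p = - (k * k * a * b * c) := by
    apply mul_right_cancel₀ (mul_ne_zero (mul_ne_zero nEx nEy) nEz)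
    have e1 : p * (Ex - 1) * (q * (Ey - 1)) = k * a * (Ex + 1) * (k * b * (Ey + 1)) := by rw [ex, ey]
    have e2 : q * (Ey - 1) * (r * (Ez - 1)) = k * b * (Ey + 1) * (k * c * (Ez + 1)) := by rw [ez, ey]
    have e3 : r * (Ez - 1) * (p * (Ex - 1)) = k * c * (Ez + 1) * (k * a * (Ex + 1)) := by rw [ex, ez]
    linear_combination c * (Ez - 1) * e1 + a * (Ex - 1) * e2 + b * (Ey - 1) * e3
      + 4 * k * k * a * b * c * hE
  apply mul_left_cancel₀ (mul_ne_zero (mul_ne_zero nx ny) nz)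
  rw [hp, hq', hr] at main
  linear_combination b * c * dx + a * c * dy + a * b * dz - main + hs

lemma cd_bound (m : ℕ) : |cdCoef m| * (2 * Real.pi) ^ (m + 1) ≤ Real.pi ^ 2 / 3 := by
  by_cases h : Odd m
  · obtain ⟨k, rfl⟩ := h
    have hz := hasSum_zeta_nat (k := k + 1) (by omega)
    have h2 := hasSum_zeta_two
    have hle := hasSum_le (fun n => by
      show 1 / (n : ℝ) ^ (2 * (k+1)) ≤ 1 / (n : ℝ) ^ 2
      rcases Nat.eq_zero_or_pos n with rfl | hn
      · simp
      · have : (1 : ℝ) ≤ n := by exact_mod_cast hn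
        apply one_div_le_one_div_of_le (by positivity)
        exact pow_le_pow_right₀ this (by omega)) hz h2
    have hnn := hz.nonneg (fun n => by positivity)
    have habs := abs_of_nonneg hnn
    rw [← habs] at hle
    simp only [cdCoef, show Odd (2 * k + 1) from ⟨k, rfl⟩, if_true]
    rw [abs_neg, ← abs_of_nonneg (show 0 ≤ (2 * Real.pi) ^ (2 * k + 1 + 1) by positivity), ← abs_mul]
    have e : |((bernoulli (2 * k + 1 + 1) : ℚ) : ℝ) / ((2 * k + 1 + 1).factorial : ℝ) *
      (2 * Real.pi) ^ (2 * k + 1 + 1)| = 2 * |(-1 : ℝ) ^ (k + 1 + 1) * (2 : ℝ) ^ (2 * (k + 1) - 1) *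
        Real.pi ^ (2 * (k + 1)) * bernoulli (2 * (k + 1)) / (2 * (k + 1)).factorial| := by
      rw [show 2 * (k + 1) - 1 = 2 * k + 1 by omega, show 2 * (k + 1) = 2 * k + 1 + 1 by ring]
      simp only [abs_mul, abs_div, abs_pow, abs_neg, abs_one, one_pow]
      rw [abs_of_nonneg (show (0:ℝ) ≤ 2 by norm_num)]
      ring
    rw [e]; linarith
  · simp [cdCoef, h]; positivity

lemma cd_summable {r : ℝ} (h0 : 0 ≤ r) (hr : r < 2 * Real.pi) :
    Summable (fun m : ℕ => |cdCoef m| * ((m : ℝ) * r ^ (m - 1))) := by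
  have hp : 0 < 2 * Real.pi := by positivity
  rw [← summable_nat_add_iff 1]
  have hq : ‖r / (2 * Real.pi)‖ < 1 := by
    rw [Real.norm_of_nonneg (by positivity), div_lt_one hp]; exact hr
  have s1 := summable_pow_mul_geometric_of_norm_lt_one 1 hq
  have s0 := summable_pow_mul_geometric_of_norm_lt_one 0 hq
  refine Summable.of_nonneg_of_le (fun m => by positivity) (fun m => ?_)
    ((s1.add s0).mul_left (Real.pi ^ 2 / 3 / (2 * Real.pi) ^ 2))
  have hb := cd_bound (m + 1)
  have hb' : |cdCoef (m+1)| ≤ Real.pi ^ 2 / 3 / (2 * Real.pi) ^ (m + 1 + 1) := by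
    rwa [le_div_iff₀ (by positivity)]
  calc |cdCoef (m+1)| * (((m + 1 : ℕ) : ℝ) * r ^ (m + 1 - 1))
      ≤ Real.pi ^ 2 / 3 / (2 * Real.pi) ^ (m + 1 + 1) * (((m + 1 : ℕ) : ℝ) * r ^ (m + 1 - 1)) := by
        gcongr
    _ = _ := by
        rw [Nat.add_sub_cancel, div_pow]; push_cast
        generalize 2 * Real.pi = w at *
        field_simp
        ring

lemma cd_summable0 {r : ℝ} (h0 : 0 ≤ r) (hr : r < 2 * Real.pi) :
    Summable (fun m : ℕ => |cdCoef m| * r ^ m) := by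
  refine Summable.of_nonneg_of_le (fun m => by positivity) (fun m => ?_)
    ((cd_summable h0 hr).mul_left r)
  rcases m with _ | m
  · simp [cdCoef]
  · rw [Nat.add_sub_cancel, pow_succ]
    have : (1 : ℝ) ≤ ((m + 1 : ℕ) : ℝ) := by push_cast; linarith [Nat.cast_nonneg (α := ℝ) m]
    have h3 : 0 ≤ |cdCoef (m+1)| * r ^ m * r := by positivity
    nlinarith

lemma cd_norm_pow {𝔸 : Type*} [NormedRing 𝔸] (h1 : ‖(1 : 𝔸)‖ ≤ 1) {A : 𝔸} {r : ℝ} (hA : ‖A‖ ≤ r)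
    (n : ℕ) : ‖A ^ n‖ ≤ r ^ n := by
  induction n with
  | zero => simpa using h1
  | succ n ih =>
    rw [pow_succ, pow_succ]
    exact (norm_mul_le _ _).trans (mul_le_mul ih hA (norm_nonneg _) ((norm_nonneg _).trans ih))

lemma cd_sumT {𝔸 : Type*} [NormedRing 𝔸] [NormedAlgebra ℝ 𝔸]
    (h1 : ‖(1 : 𝔸)‖ ≤ 1) {A : 𝔸} (hA : ‖A‖ < 2 * Real.pi) :
    Summable (fun n => ‖cdCoef n • A ^ n‖) := by
  refine Summable.of_nonneg_of_le (fun m => by positivity) (fun m => ?_)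
    (cd_summable0 (norm_nonneg A) hA)
  rw [norm_smul, Real.norm_eq_abs]
  gcongr
  exact cd_norm_pow h1 le_rfl m

open scoped RightActions in
lemma cd_deriv {E 𝔸 : Type*} [NormedAddCommGroup E] [NormedSpace ℝ E]
    [NormedRing 𝔸] [NormedAlgebra ℝ 𝔸] [CompleteSpace 𝔸]
    (h1 : ‖(1 : 𝔸)‖ ≤ 1) (L : E →L[ℝ] 𝔸) {x : E} (hx : ‖L x‖ < 2 * Real.pi) :
    ∃ T' : E →L[ℝ] 𝔸, HasFDerivAt (fun y => ∑' n, cdCoef n • L y ^ n) T' x ∧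
      ∀ v, HasSum (fun n => cdCoef (n + 1) • ∑ p ∈ Finset.HasAntidiagonal.antidiagonal n,
        L x ^ p.1 * L v * L x ^ p.2) (T' v) := by
  obtain ⟨r, hr1, hr2⟩ := exists_between hx
  have hr0 : 0 ≤ r := (norm_nonneg _).trans hr1.le
  have hu := (cd_summable hr0 hr2).mul_right ‖L‖
  let s : Set E := {y | ‖L y‖ < r}
  have hs : IsOpen s := isOpen_lt (by fun_prop) continuous_const
  have hconv : Convex ℝ s := by
    have : s = L ⁻¹' (Metric.ball 0 r) := by ext y; simp [s]
    rw [this]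
    exact (convex_ball (0 : 𝔸) r).linear_preimage L.toLinearMap
  let f' : ℕ → E → (E →L[ℝ] 𝔸) := fun n y => cdCoef n •
    (∑ i ∈ Finset.range n, L y ^ (n.pred - i) •> L <• L y ^ i)
  have hfa : ∀ n y v, f' n y v = cdCoef n • ∑ i ∈ Finset.range n,
      L y ^ (n.pred - i) * L v * L y ^ i := by
    intro n y v
    simp [f', ContinuousLinearMap.sum_apply, mul_assoc]
  have hf : ∀ n y, y ∈ s → HasFDerivAt (fun y => cdCoef n • L y ^ n) (f' n y) y := by
    intro n y _
    exact (HasFDerivAt.pow' L.hasFDerivAt n).const_smul (cdCoef n)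
  have hf' : ∀ n y, y ∈ s → ‖f' n y‖ ≤ |cdCoef n| * ((n : ℝ) * r ^ (n - 1)) * ‖L‖ := by
    intro n y hy
    refine ContinuousLinearMap.opNorm_le_bound _ (by positivity) (fun v => ?_)
    rw [hfa, norm_smul, Real.norm_eq_abs, mul_assoc, mul_assoc]
    gcongr
    calc ‖∑ i ∈ Finset.range n, L y ^ (n.pred - i) * L v * L y ^ i‖
        ≤ ∑ i ∈ Finset.range n, r ^ (n - 1) * (‖L‖ * ‖v‖) := by
          refine norm_sum_le_of_le _ (fun i hi => ?_)
          have hy' : ‖L y‖ ≤ r := le_of_lt hy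
          have hi' : i < n := Finset.mem_range.mp hi
          calc ‖L y ^ (n.pred - i) * L v * L y ^ i‖
              ≤ ‖L y ^ (n.pred - i)‖ * ‖L v‖ * ‖L y ^ i‖ := by
                refine (norm_mul_le _ _).trans ?_
                gcongr
                exact norm_mul_le _ _
            _ ≤ r ^ (n.pred - i) * (‖L‖ * ‖v‖) * r ^ i := by
                gcongr
                · exact cd_norm_pow h1 hy' _
                · exact L.le_opNorm v
                · exact cd_norm_pow h1 hy' _
            _ = r ^ (n - 1) * (‖L‖ * ‖v‖) := by
                rw [show n - 1 = (n.pred - i) + i by rw [Nat.pred_eq_sub_one]; omega, pow_add]; ring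
      _ = n * (r ^ (n - 1) * (‖L‖ * ‖v‖)) := by simp
      _ = _ := by ring
  have hD := hasFDerivAt_tsum_of_isPreconnected hu hs hconv.isPreconnected hf hf' hr1
    (cd_sumT h1 hx).of_norm (show x ∈ s from hr1)
  refine ⟨_, hD, fun v => ?_⟩
  have hsum : Summable (fun n => f' n x) := Summable.of_norm_bounded hu (fun n => hf' n x hr1)
  have h2 : HasSum (fun n => f' n x v) ((∑' n, f' n x) v) :=
    hsum.hasSum.mapL (ContinuousLinearMap.apply ℝ 𝔸 v)
  rw [← hasSum_nat_add_iff' 1] at h2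
  simp only [Finset.range_one, Finset.sum_singleton] at h2
  rw [show f' 0 x v = 0 by simp [hfa], sub_zero] at h2
  refine h2.congr_fun ?_ |> id
  intro n
  rw [hfa]
  congr 1
  rw [← Finset.Nat.sum_antidiagonal_swap]
  have := Finset.Nat.sum_antidiagonal_eq_sum_range_succ
    (fun i j => L x ^ j * L v * L x ^ i) n
  simpa using this

lemma cd_bilin {E F : Type*} [NormedAddCommGroup E] [NormedSpace ℝ E]
    [NormedAddCommGroup F] [NormedSpace ℝ F] (B : E →L[ℝ] F →L[ℝ] ℝ)
    {u : ℕ → E} {v : ℕ → F} {a : E} {b : F} (hu : HasSum u a) (hv : HasSum v b)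
    (hu' : Summable fun n => ‖u n‖) (hv' : Summable fun n => ‖v n‖) :
    HasSum (fun n => ∑ p ∈ Finset.HasAntidiagonal.antidiagonal n, B (u p.1) (v p.2)) (B a b) := by
  have hS : Summable (fun p : ℕ × ℕ => B (u p.1) (v p.2)) := by
    refine Summable.of_norm_bounded
      ((hu'.mul_of_nonneg hv' (fun _ => norm_nonneg _) (fun _ => norm_nonneg _)).mul_left ‖B‖)
      (fun p => ?_)
    rw [← mul_assoc]
    exact B.le_opNorm₂ _ _
  have h1 := hS.hasSum.prod_fiberwise (fun i => hv.mapL (B (u i)))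
  have h2 : HasSum (fun i => B (u i) b) (B a b) := hu.mapL (B.flip b)
  have h3 := h1.unique h2
  have h4 := hS.hasSum
  rw [h3] at h4
  have h5 := (Finset.HasAntidiagonal.sigmaAntidiagonalEquivProd (A := ℕ)).hasSum_iff.mpr h4
  refine h5.sigma (fun n => ?_)
  have := hasSum_fintype (fun c : Finset.HasAntidiagonal.antidiagonal n => B (u c.1.1) (v c.1.2))
  rw [Finset.sum_coe_sort (Finset.HasAntidiagonal.antidiagonal n) (fun c => B (u c.1) (v c.2))] at this
  exact this

/-- linear functional on polynomials attached to a family satisfying the invariance relation -/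
lemma cd_functional (φ : ℕ → ℕ → ℕ → ℝ)
    (hφ : ∀ p q r, φ (p+1) q r + φ p (q+1) r + φ p q (r+1) = 0) :
    ∃ Φ : MvPolynomial (Fin 2) ℝ →ₗ[ℝ] ℝ, ∀ p q r,
      Φ (MvPolynomial.X 0 ^ p * MvPolynomial.X 1 ^ q *
        (-MvPolynomial.X 0 - MvPolynomial.X 1) ^ r) = φ p q r := by
  refine ⟨(MvPolynomial.basisMonomials (Fin 2) ℝ).constr ℝ (fun s => φ (s 0) (s 1) 0), ?_⟩
  intro p q r
  induction r generalizing p q with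
  | zero =>
    have : (MvPolynomial.X 0 ^ p * MvPolynomial.X 1 ^ q : MvPolynomial (Fin 2) ℝ) =
        MvPolynomial.basisMonomials (Fin 2) ℝ (Finsupp.single 0 p + Finsupp.single 1 q) := by
      rw [MvPolynomial.coe_basisMonomials, MvPolynomial.X_pow_eq_monomial,
        MvPolynomial.X_pow_eq_monomial, MvPolynomial.monomial_mul, one_mul]
    rw [pow_zero, mul_one, this, Module.Basis.constr_basis]
    simp
  | succ r ih =>
    have e : (MvPolynomial.X 0 ^ p * MvPolynomial.X 1 ^ q *
        (-MvPolynomial.X 0 - MvPolynomial.X 1) ^ (r+1) : MvPolynomial (Fin 2) ℝ) =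
        -(MvPolynomial.X 0 ^ (p+1) * MvPolynomial.X 1 ^ q *
        (-MvPolynomial.X 0 - MvPolynomial.X 1) ^ r)
        -(MvPolynomial.X 0 ^ p * MvPolynomial.X 1 ^ (q+1) *
        (-MvPolynomial.X 0 - MvPolynomial.X 1) ^ r) := by ring
    rw [e, map_sub, map_neg, ih, ih]
    linarith [hφ p q r]

/-- degree-`n` part of the identity. -/
lemma cd_degree (φ : ℕ → ℕ → ℕ → ℝ)
    (hφ : ∀ p q r, φ (p+1) q r + φ p (q+1) r + φ p q (r+1) = 0) (n : ℕ) :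
    (- (cdCoef (n+1) * ∑ p ∈ Finset.HasAntidiagonal.antidiagonal n, (-1) ^ p.1 * φ 0 p.1 p.2))
    + (- (cdCoef (n+1) * ∑ p ∈ Finset.HasAntidiagonal.antidiagonal n, (-1) ^ p.1 * φ p.2 0 p.1))
    + (- (cdCoef (n+1) * ∑ p ∈ Finset.HasAntidiagonal.antidiagonal n, (-1) ^ p.1 * φ p.1 p.2 0))
    - (∑ p ∈ Finset.HasAntidiagonal.antidiagonal n, cdCoef p.1 * cdCoef p.2 * φ p.1 0 p.2)
    - (∑ p ∈ Finset.HasAntidiagonal.antidiagonal n, cdCoef p.1 * cdCoef p.2 * φ p.2 p.1 0)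
    - (∑ p ∈ Finset.HasAntidiagonal.antidiagonal n, cdCoef p.1 * cdCoef p.2 * φ 0 p.2 p.1)
    = if n = 0 then 1 / 4 * φ 0 0 0 else 0 := by
  obtain ⟨Φ, hΦ⟩ := cd_functional φ hφ
  have hX : ∀ i : Fin 2, (MvPolynomial.X i : MvPolynomial (Fin 2) ℝ) ≠ 0 :=
    fun i => MvPolynomial.X_ne_zero i
  have hz : (-MvPolynomial.X 0 - MvPolynomial.X 1 : MvPolynomial (Fin 2) ℝ) ≠ 0 := by
    intro h
    have := congrArg (MvPolynomial.eval (fun _ => (1:ℝ))) h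
    norm_num at this
  have key := cd_formal (MvPolynomial.X 0 : MvPolynomial (Fin 2) ℝ) (MvPolynomial.X 1)
    (-MvPolynomial.X 0 - MvPolynomial.X 1) (by ring) (hX 0) (hX 1) hz
  have k2 := congrArg (fun s => Φ (PowerSeries.coeff n s)) key
  have hA : ∀ (r : ℝ) (x : MvPolynomial (Fin 2) ℝ), Φ (algebraMap ℝ _ r * x) = r * Φ x := by
    intro r x; rw [← Algebra.smul_def, map_smul, smul_eq_mul]
  have hneg : ∀ (k : ℕ) (x y : MvPolynomial (Fin 2) ℝ),
      Φ ((-x) ^ k * y) = (-1) ^ k * Φ (x ^ k * y) := by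
    intro k x y
    rw [neg_pow, mul_assoc]
    rcases Nat.even_or_odd k with h | h <;> simp [h.neg_one_pow]
  have hA2 : ∀ (r s : ℝ) (x y : MvPolynomial (Fin 2) ℝ),
      Φ (algebraMap ℝ _ r * x * (algebraMap ℝ _ s * y)) = r * s * Φ (x * y) := by
    intro r s x y
    rw [show algebraMap ℝ (MvPolynomial (Fin 2) ℝ) r * x * (algebraMap ℝ _ s * y) =
      algebraMap ℝ _ r * (algebraMap ℝ _ s * (x * y)) by ring, hA, hA, mul_assoc]
  have e1 : ∀ p q, Φ (MvPolynomial.X 1 ^ p * (-MvPolynomial.X 0 - MvPolynomial.X 1) ^ q) = φ 0 p q := by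
    intro p q; rw [← hΦ]; congr 1; ring
  have e2 : ∀ p q, Φ ((-MvPolynomial.X 0 - MvPolynomial.X 1) ^ p * MvPolynomial.X 0 ^ q) = φ q 0 p := by
    intro p q; rw [← hΦ]; congr 1; ring
  have e3 : ∀ p q, Φ (MvPolynomial.X 0 ^ p * MvPolynomial.X 1 ^ q) = φ p q 0 := by
    intro p q; rw [← hΦ]; congr 1; ring
  have e4 : ∀ p q, Φ (MvPolynomial.X 0 ^ p * (-MvPolynomial.X 0 - MvPolynomial.X 1) ^ q) = φ p 0 q := by
    intro p q; rw [← hΦ]; congr 1; ring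
  have e5 : ∀ p q, Φ (MvPolynomial.X 1 ^ p * MvPolynomial.X 0 ^ q) = φ q p 0 := by
    intro p q; rw [← hΦ]; congr 1; ring
  have e6 : ∀ p q, Φ ((-MvPolynomial.X 0 - MvPolynomial.X 1) ^ p * MvPolynomial.X 1 ^ q) = φ 0 q p := by
    intro p q; rw [← hΦ]; congr 1; ring
  simp only [cdD, cdF, map_sub, map_add, map_neg, PowerSeries.coeff_mk, PowerSeries.coeff_mul,
    hA, map_sum, hneg, hA2, e1, e2, e3, e4, e5, e6, PowerSeries.coeff_C] at k2
  rw [k2]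
  split_ifs with h
  · have h0 := hΦ 0 0 0
    simp only [pow_zero, mul_one] at h0
    rw [← h0, ← hA, mul_one]
  · simp

/-- the analytic part. -/
lemma cd_main {g : Type*} [NormedAddCommGroup g] [InnerProductSpace ℝ g]
    [FiniteDimensional ℝ g]
    (br : g →ₗ[ℝ] g →ₗ[ℝ] g)
    (skew : ∀ u v : g, br u v = - br v u)
    (br_jacobi : ∀ u v w : g, br u (br v w) = br (br u v) w + br v (br u w))
    (br_inv : ∀ u v w : g, inner ℝ (br u v) w + inner ℝ v (br u w) = 0)
    (L : g →L[ℝ] (g →L[ℝ] g)) (hL : ∀ μ v, L μ v = br μ v) (μ : g) (hμ : ‖L μ‖ < 2 * Real.pi)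
    (T : g →L[ℝ] g) (hT : HasSum (fun n => cdCoef n • L μ ^ n) T)
    (T' : g →L[ℝ] (g →L[ℝ] g))
    (hT' : ∀ v, HasSum (fun n => cdCoef (n + 1) • ∑ p ∈ Finset.HasAntidiagonal.antidiagonal n,
        L μ ^ p.1 * L v * L μ ^ p.2) (T' v)) (a b c : g) :
    (inner ℝ b (T' a c) - inner ℝ (br (T a) b) (T c))
    + (inner ℝ c (T' b a) - inner ℝ (br (T b) c) (T a))
    + (inner ℝ a (T' c b) - inner ℝ (br (T c) a) (T b)) = 1 / 4 * inner ℝ (br a b) c := by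
  set A := L μ with hA
  have hadj : ∀ (n : ℕ) (x y : g), inner ℝ x ((A ^ n) y) = (-1) ^ n * inner ℝ ((A ^ n) x) y := by
    intro n
    induction n with
    | zero => simp
    | succ n ih =>
      intro x y
      have := br_inv μ x ((A ^ n) y)
      rw [pow_succ' A n, ContinuousLinearMap.mul_apply, ContinuousLinearMap.mul_apply, hA, hL, hL,
        ← hA]
      have h2 := ih (br μ x) y
      have h3 : (A ^ n) (br μ x) = br μ ((A ^ n) x) := by
        rw [← hL, ← hL, ← hA, ← ContinuousLinearMap.mul_apply, ← ContinuousLinearMap.mul_apply,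
          ← pow_succ, ← pow_succ']
      rw [h3] at h2
      rw [pow_succ]
      linarith
  -- cyclicity
  have cyc : ∀ x y z : g, inner ℝ (br x y) z = inner ℝ (br y z) x := by
    intro x y z
    have := br_inv y x z
    rw [skew x y, inner_neg_left, real_inner_comm x (br y z)]
    linarith
  have anti : ∀ x y z : g, inner ℝ (br x y) z = - inner ℝ (br y x) z := by
    intro x y z; rw [skew x y, inner_neg_left]
  let φ : ℕ → ℕ → ℕ → ℝ := fun p q r => inner ℝ (br ((A ^ p) a) ((A ^ q) b)) ((A ^ r) c)
  have hφ : ∀ p q r, φ (p+1) q r + φ p (q+1) r + φ p q (r+1) = 0 := by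
    intro p q r
    have h1 : ∀ (k : ℕ) (x : g), (A ^ (k+1)) x = br μ ((A ^ k) x) := by
      intro k x; rw [pow_succ', ContinuousLinearMap.mul_apply, hA, hL]
    simp only [φ, h1]
    have h2 := br_inv μ (br ((A ^ p) a) ((A ^ q) b)) ((A ^ r) c)
    rw [br_jacobi, inner_add_left] at h2
    exact h2
  -- derivative terms
  have hD : ∀ x y z : g, HasSum (fun n => - (cdCoef (n+1) *
      ∑ p ∈ Finset.HasAntidiagonal.antidiagonal n, (-1) ^ p.1 *
        inner ℝ (br x ((A ^ p.1) y)) ((A ^ p.2) z))) (inner ℝ y (T' x z)) := by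
    intro x y z
    have h1 := ((hT' x).mapL (ContinuousLinearMap.apply ℝ g z)).mapL (innerSL ℝ y)
    refine h1.congr_fun ?_ |> id
    intro n
    simp only [ContinuousLinearMap.apply_apply, innerSL_apply_apply, ContinuousLinearMap.smul_apply,
      inner_smul_right, ContinuousLinearMap.sum_apply, inner_sum, ContinuousLinearMap.mul_apply, hL]
    rw [← mul_neg, ← Finset.sum_neg_distrib]
    congr 1
    refine Finset.sum_congr rfl (fun p _ => ?_)
    rw [hadj p.1 y, ← mul_neg]
    congr 1
    linarith [br_inv x ((A ^ p.1) y) ((A ^ p.2) z)]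
  have one_le : ‖(1 : g →L[ℝ] g)‖ ≤ 1 := ContinuousLinearMap.norm_id_le
  have hTx : ∀ x, HasSum (fun n => cdCoef n • (A ^ n) x) (T x) := fun x =>
    hT.mapL (ContinuousLinearMap.apply ℝ g x)
  have hTn : ∀ x, Summable (fun n => ‖cdCoef n • (A ^ n) x‖) := by
    intro x
    refine Summable.of_nonneg_of_le (fun _ => norm_nonneg _) (fun n => ?_)
      ((cd_sumT one_le hμ).mul_right ‖x‖)
    exact (cdCoef n • A ^ n).le_opNorm x
  have hF : ∀ x y z : g, HasSum (fun n => ∑ p ∈ Finset.HasAntidiagonal.antidiagonal n,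
      cdCoef p.1 * cdCoef p.2 * inner ℝ (br ((A ^ p.1) x) y) ((A ^ p.2) z))
      (inner ℝ (br (T x) y) (T z)) := by
    intro x y z
    let B : g →L[ℝ] g →L[ℝ] ℝ := (innerSL ℝ).comp (L.flip y)
    have hB : ∀ u v, B u v = inner ℝ (br u y) v := by
      intro u v; simp [B, hL]
    have := cd_bilin B (hTx x) (hTx z) (hTn x) (hTn z)
    rw [hB] at this
    refine this.congr_fun ?_ |> id
    intro n
    refine Finset.sum_congr rfl (fun p _ => ?_)
    rw [map_smul, map_smul, ContinuousLinearMap.smul_apply, hB, smul_eq_mul, smul_eq_mul]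
    ring
  have tot := ((((((hD a b c).add (hD b c a)).add (hD c a b)).sub (hF a b c)).sub (hF b c a)).sub
    (hF c a b))
  have tot2 : HasSum (fun n : ℕ => if n = 0 then 1 / 4 * φ 0 0 0 else 0) (1 / 4 * φ 0 0 0) :=
    hasSum_ite_eq 0 _
  have e := tot.unique (tot2.congr_fun ?_ |> id)
  · have : φ 0 0 0 = inner ℝ (br a b) c := by simp [φ]
    rw [this] at e
    linarith
  · intro n
    rw [← cd_degree φ hφ n]
    have c1 : ∀ p q, inner ℝ (br a ((A ^ p) b)) ((A ^ q) c) = φ 0 p q := by intro p q; simp [φ]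
    have c2 : ∀ p q, inner ℝ (br b ((A ^ p) c)) ((A ^ q) a) = φ q 0 p := by
      intro p q; simp only [φ]; rw [cyc, cyc]; simp
    have c3 : ∀ p q, inner ℝ (br c ((A ^ p) a)) ((A ^ q) b) = φ p q 0 := by
      intro p q; simp only [φ]; rw [cyc]; simp
    have c4 : ∀ p q, inner ℝ (br ((A ^ p) a) b) ((A ^ q) c) = φ p 0 q := by intro p q; simp [φ]
    have c5 : ∀ p q, inner ℝ (br ((A ^ p) b) c) ((A ^ q) a) = φ q p 0 := by
      intro p q; simp only [φ]; rw [cyc, cyc]; simp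
    have c6 : ∀ p q, inner ℝ (br ((A ^ p) c) a) ((A ^ q) b) = φ 0 q p := by
      intro p q; simp only [φ]; rw [cyc]; simp
    simp only [c1, c2, c3, c4, c5, c6]

/-- classical dynamical Yang–Baxter equation, Etingof–Varchenko.
For a Lie algebra `𝔤` with ad-invariant inner product and orthonormal basis `e`, the tensor
`T_{ab}(μ) = ⟨e_a, f(ad_μ) e_b⟩`, `f(s) = 1/s − ½coth(s/2)`, given by the Bernoulli series
`T(μ) = −∑_{k≥1} (B_{2k}/(2k)!) ad_μ^{2k−1}`, is differentiable on the open set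
`{μ : ‖ad_μ‖ < 2π}` and satisfies there
`∑_cyclic [∂T_{bc}/∂μ_a + T_{ar} f_{rbs} T_{sc}] = ¼ f_{abc}`. -/
theorem structure_tensor_CDYBE
    {n : ℕ} {g : Type*} [NormedAddCommGroup g] [InnerProductSpace ℝ g]
    [FiniteDimensional ℝ g]
    -- the Lie bracket, as a bilinear map
    (br : g →ₗ[ℝ] g →ₗ[ℝ] g)
    (br_alt : ∀ v : g, br v v = 0)
    (br_jacobi : ∀ u v w : g, br u (br v w) = br (br u v) w + br v (br u w))
    -- ad-invariance of the inner product
    (br_inv : ∀ u v w : g, ⟪br u v, w⟫ + ⟪v, br u w⟫ = 0)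
    -- an orthonormal basis
    (e : OrthonormalBasis (Fin n) ℝ g)
    -- structure constants
    (f : Fin n → Fin n → Fin n → ℝ)
    (hf : ∀ a b c, f a b c = ⟪br (e a) (e b), e c⟫)
    -- ad_μ as a continuous linear operator
    (ad : g → g →L[ℝ] g)
    (had : ∀ μ v, ad μ v = br μ v)
    -- the operator T(μ) = −∑_{k≥1} (B_{2k}/(2k)!) (ad_μ)^{2k−1} = f(ad_μ)
    (T : g → g →L[ℝ] g)
    (hT : ∀ μ, T μ = -∑' k : ℕ,
      (((bernoulli (2 * (k + 1)) : ℚ) : ℝ) / ((2 * (k + 1)).factorial : ℝ)) •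
        ad μ ^ (2 * (k + 1) - 1))
    -- its matrix entries
    (Tab : Fin n → Fin n → g → ℝ)
    (hTab : ∀ a b μ, Tab a b μ = ⟪e a, T μ (e b)⟫)
    -- the open set where the series converges
    (U : Set g)
    (hU : U = {μ : g | ‖ad μ‖ < 2 * Real.pi}) :
    IsOpen U ∧
    (∀ a b, DifferentiableOn ℝ (Tab a b) U) ∧
    ∀ μ ∈ U, ∀ a b c,
      (fderiv ℝ (Tab b c) μ (e a) + ∑ r, ∑ s, Tab a r μ * f r b s * Tab s c μ)
      + (fderiv ℝ (Tab c a) μ (e b) + ∑ r, ∑ s, Tab b r μ * f r c s * Tab s a μ)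
      + (fderiv ℝ (Tab a b) μ (e c) + ∑ r, ∑ s, Tab c r μ * f r a s * Tab s b μ)
      = (1 / 4 : ℝ) * f a b c := by
  let Ll : g →ₗ[ℝ] (g →L[ℝ] g) :=
    { toFun := ad
      map_add' := by intro x y; ext v; simp [had]
      map_smul' := by intro r x; ext v; simp [had] }
  let L : g →L[ℝ] (g →L[ℝ] g) := LinearMap.toContinuousLinearMap Ll
  have hLad : ∀ μ, L μ = ad μ := fun μ => rfl
  have hL : ∀ μ v, L μ v = br μ v := fun μ v => by rw [hLad, had]
  have one_le : ‖(1 : g →L[ℝ] g)‖ ≤ 1 := ContinuousLinearMap.norm_id_le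
  have skew : ∀ u v : g, br u v = - br v u := by
    intro u v
    have h := br_alt (u + v)
    simp only [map_add, LinearMap.add_apply, br_alt, zero_add, add_zero] at h
    rw [eq_neg_iff_add_eq_zero, ← h, add_comm]
  have hTL : ∀ μ, T μ = ∑' n, cdCoef n • L μ ^ n := by
    intro μ
    rw [hT, ← tsum_neg]
    have hinj : Function.Injective (fun k : ℕ => 2 * k + 1) := fun i j h => by
      simp only at h; omega
    rw [← hinj.tsum_eq (f := fun n => cdCoef n • L μ ^ n)]
    · refine tsum_congr (fun k => ?_)
      rw [show 2 * (k + 1) - 1 = 2 * k + 1 by omega]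
      simp only [cdCoef, show Odd (2 * k + 1) from ⟨k, rfl⟩, if_true, hLad,
        show 2 * k + 1 + 1 = 2 * (k + 1) by ring, neg_smul]
    · intro n hn
      by_contra hno
      apply hn
      have : ¬ Odd n := fun ⟨k, hk⟩ => hno ⟨k, hk.symm⟩
      simp [cdCoef, this]
  have hTfun : T = fun μ => ∑' n, cdCoef n • L μ ^ n := funext hTL
  have hmem : ∀ μ ∈ U, ‖L μ‖ < 2 * Real.pi := by
    intro μ hμ; rw [hU] at hμ; exact hμ
  have hderiv : ∀ μ (T' : g →L[ℝ] (g →L[ℝ] g)), HasFDerivAt T T' μ → ∀ a b,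
      HasFDerivAt (Tab a b) ((innerSL ℝ (e a)).comp
        ((ContinuousLinearMap.apply ℝ g (e b)).comp T')) μ := by
    intro μ T' h a b
    have h2 : Tab a b = fun μ => (innerSL ℝ (e a)).comp (ContinuousLinearMap.apply ℝ g (e b)) (T μ) := by
      funext ν; simp [hTab]
    rw [h2]
    exact (((innerSL ℝ (e a)).comp (ContinuousLinearMap.apply ℝ g (e b))).hasFDerivAt).comp μ h
  refine ⟨?_, ?_, ?_⟩
  · rw [hU]
    exact isOpen_lt (L.continuous.norm) continuous_const
  · intro a b μ hμ
    obtain ⟨T', hT', -⟩ := cd_deriv one_le L (hmem μ hμ)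
    rw [← hTfun] at hT'
    exact (hderiv μ T' hT' a b).differentiableAt.differentiableWithinAt
  · intro μ hμ a b c
    obtain ⟨T', hT', hsum⟩ := cd_deriv one_le L (hmem μ hμ)
    rw [← hTfun] at hT'
    have hTs : HasSum (fun n => cdCoef n • L μ ^ n) (T μ) := by
      rw [hTL]; exact (cd_sumT one_le (hmem μ hμ)).of_norm.hasSum
    have hfd : ∀ a b v, fderiv ℝ (Tab a b) μ v = ⟪e a, T' v (e b)⟫ := by
      intro a b v; rw [(hderiv μ T' hT' a b).fderiv]; simp
    have hadj : ∀ (n : ℕ) (x y : g),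
        inner ℝ x ((L μ ^ n) y) = (-1) ^ n * inner ℝ ((L μ ^ n) x) y := by
      intro n
      induction n with
      | zero => simp
      | succ n ih =>
        intro x y
        rw [pow_succ (L μ) n, ContinuousLinearMap.mul_apply, ih, ← pow_succ, pow_succ' (L μ) n,
          ContinuousLinearMap.mul_apply, hL, hL, pow_succ]
        have := br_inv μ ((L μ ^ n) x) y
        rw [show inner ℝ ((L μ ^ n) x) (br μ y) = - inner ℝ (br μ ((L μ ^ n) x)) y by linarith]
        ring
    have hskewT : ∀ x y : g, inner ℝ x (T μ y) = - inner ℝ (T μ x) y := by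
      intro x y
      have h1 := (hTs.mapL (ContinuousLinearMap.apply ℝ g y)).mapL (innerSL ℝ x)
      have h2 := ((hTs.mapL (ContinuousLinearMap.apply ℝ g x)).mapL (innerSL ℝ y)).neg
      have h3 := h1.unique (h2.congr_fun ?_ |> id)
      · simpa [real_inner_comm] using h3
      · intro n
        simp only [ContinuousLinearMap.apply_apply, innerSL_apply_apply,
          ContinuousLinearMap.smul_apply, inner_smul_right, hadj n x y]
        rw [real_inner_comm y]
        by_cases ho : Odd n
        · rw [ho.neg_one_pow]; ring
        · simp [cdCoef, ho]
    have hquad : ∀ a b c, ∑ r, ∑ s, Tab a r μ * f r b s * Tab s c μ =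
        - ⟪br (T μ (e a)) (e b), T μ (e c)⟫ := by
      intro a b c
      have h1 : ∀ r, ∑ s, Tab a r μ * f r b s * Tab s c μ =
          - (⟪T μ (e a), e r⟫ * ⟪e r, br (e b) (T μ (e c))⟫) := by
        intro r
        simp only [mul_assoc, hTab, hf]
        rw [← Finset.mul_sum, e.sum_inner_mul_inner, hskewT, skew (e r), inner_neg_left]
        have := br_inv (e b) (e r) (T μ (e c))
        rw [show ⟪e r, br (e b) (T μ (e c))⟫ = - ⟪br (e b) (e r), T μ (e c)⟫ by linarith]
        ring
      simp only [h1]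
      rw [Finset.sum_neg_distrib, e.sum_inner_mul_inner, skew (T μ (e a)), inner_neg_left]
      have := br_inv (e b) (T μ (e a)) (T μ (e c))
      linarith
    have main := cd_main br skew br_jacobi br_inv L hL μ (hmem μ hμ) (T μ) hTs T' hsum
      (e a) (e b) (e c)
    rw [hquad, hquad, hquad, hfd, hfd, hfd, hf]
    linarith
end

section
/- The Jacobian J of the exponential map is differentiable, and for every μ ∈ 𝔤 with ‖ad_μ‖ < 2π and every index a, the directional derivative of J at μ in the direction e_a equals J(μ) · Σ_{b,c} f_{abc} S_{bc}(μ), where S_{bc}(μ) = Σ_{k≥1} (B_{2k}/(2k)!) ⟨e_b, (ad_μ)^{2k−1} e_c⟩ = −T_{bc}(μ). Equivalently, on this set the logarithmic derivative of J in the direction e_a equals −Σ_{b,c} f_{abc} T_{bc}(μ). -/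
open scoped RealInnerProductSpace

namespace JacAux

open PowerSeries in
theorem ps_identities :
    ∃ Φ β Ψ : ℝ⟦X⟧, (∀ n, coeff n Φ = (-1) ^ n * (((n + 1).factorial : ℝ))⁻¹) ∧
      (∀ n, coeff n β = ((bernoulli' n : ℚ) : ℝ) / (n.factorial : ℝ)) ∧
      (∀ n, coeff n Ψ = ((bernoulli (n + 1) : ℚ) : ℝ) / ((n + 1).factorial : ℝ)) ∧
      Φ * β = 1 ∧ (derivative ℝ Φ) * β = Ψ := by
  refine ⟨mk fun n => (-1) ^ n * (((n + 1).factorial : ℝ))⁻¹, bernoulli'PowerSeries ℝ,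
    mk fun n => ((bernoulli (n + 1) : ℚ) : ℝ) / ((n + 1).factorial : ℝ), ?_, ?_, ?_, ?_⟩
  · intro n; simp
  · intro n; simp [bernoulli'PowerSeries]
  · intro n; simp
  set Φ : ℝ⟦X⟧ := mk fun n => (-1) ^ n * (((n + 1).factorial : ℝ))⁻¹ with hΦ
  set Ψ : ℝ⟦X⟧ := mk fun n => ((bernoulli (n + 1) : ℚ) : ℝ) / ((n + 1).factorial : ℝ) with hΨ
  set β := bernoulli'PowerSeries ℝ with hβ
  set E := exp ℝ
  set N := evalNegHom E with hN
  have hEN : E * N = 1 := exp_mul_exp_neg_eq_one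
  have h1 : β * (E - 1) = X * E := bernoulli'PowerSeries_mul_exp_sub_one ℝ
  have h2 : bernoulliPowerSeries ℝ * (E - 1) = X := bernoulliPowerSeries_mul_exp_sub_one ℝ
  have cN : ∀ n, coeff n N = (-1) ^ n * ((n.factorial : ℝ))⁻¹ := by
    intro n
    simp [hN, E, evalNegHom, coeff_rescale]
  have h3 : X * Φ = 1 - N := by
    ext n
    rcases n with _ | n
    · rw [coeff_zero_X_mul, map_sub, cN]; simp
    · rw [coeff_succ_X_mul, map_sub, cN, hΦ]; simp [coeff_one, pow_succ]
  have h4 : X * derivative ℝ Φ + Φ = N := by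
    ext n
    rcases n with _ | n
    · rw [map_add, coeff_zero_X_mul, cN]; simp [hΦ]
    · rw [map_add, coeff_succ_X_mul, cN, hΦ, coeff_derivative, coeff_mk]
      rw [Nat.factorial_succ (n+1)]
      have : ((n+1).factorial : ℝ) ≠ 0 := by positivity
      push_cast
      field_simp
  have h5 : X * Ψ = bernoulliPowerSeries ℝ - 1 := by
    ext n
    rcases n with _ | n
    · rw [coeff_zero_X_mul, map_sub]; simp [bernoulliPowerSeries]
    · rw [coeff_succ_X_mul, map_sub, hΨ]; simp [coeff_one, bernoulliPowerSeries]
  have hX : (X : ℝ⟦X⟧) ≠ 0 := X_ne_zero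
  have hE : E - 1 ≠ 0 := by
    intro h; rw [h, mul_zero] at h2; exact hX h2.symm
  have h6 : Φ * β = 1 := by
    apply mul_left_cancel₀ hX
    linear_combination β * h3 + N * h1 + (X - β) * hEN
  refine ⟨h6, ?_⟩
  have h7 : N * β = bernoulliPowerSeries ℝ := by
    apply mul_right_cancel₀ hE
    linear_combination N * h1 + X * hEN - h2
  apply mul_left_cancel₀ hX
  linear_combination β * h4 - h6 + h7 - h5

theorem hasSum_of_eq {u v : ℕ → ℝ} {a : ℝ} (h : ∀ n, u n = v n) (hv : HasSum v a) :
    HasSum u a := by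
  rw [show u = v from funext h]; exact hv

theorem bern_bound (n : ℕ) :
    |((bernoulli n : ℚ) : ℝ) / (n.factorial : ℝ)| ≤ 4 / (2 * Real.pi) ^ n := by
  have hpi := Real.pi_pos
  have hpi3 := Real.pi_lt_d2
  rcases Nat.even_or_odd n with h | h
  · obtain ⟨k, rfl⟩ := h
    rw [← two_mul]
    rcases Nat.eq_zero_or_pos k with rfl | hk
    · norm_num
    have hz := hasSum_zeta_nat hk.ne'
    have hz2 := hasSum_zeta_two
    have hle := hasSum_le (fun m : ℕ => by
      rcases Nat.eq_zero_or_pos m with rfl | hm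
      · simp [hk.ne']
      · have : (1:ℝ) ≤ m := by exact_mod_cast hm
        exact one_div_le_one_div_of_le (by positivity) (pow_le_pow_right₀ this (by omega))) hz hz2
    have hnn := hz.nonneg (fun m => by positivity)
    have key : |((bernoulli (2*k) : ℚ) : ℝ) / ((2*k).factorial : ℝ)| * (2 * Real.pi) ^ (2*k) / 2
        ≤ Real.pi ^ 2 / 6 := by
      rw [← abs_of_nonneg hnn] at hle
      refine le_trans (le_of_eq ?_) hle
      have : (2:ℝ) ^ (2 * k) = 2 ^ (2*k-1) * 2 := by
        rw [← pow_succ]; congr 1; omega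
      simp only [abs_mul, abs_div, abs_pow, abs_neg, abs_one, one_pow, one_mul, mul_pow, this,
        abs_of_pos hpi, Nat.abs_cast, Nat.abs_ofNat]
      ring
    rw [le_div_iff₀ (by positivity)]
    nlinarith
  · rcases eq_or_ne n 1 with rfl | h1
    · rw [bernoulli_one, le_div_iff₀ (by positivity)]
      norm_num [abs_div]
      linarith
    · rw [bernoulli_eq_zero_of_odd h (by obtain ⟨k, rfl⟩ := h; omega)]
      simp
      positivity

set_option linter.unusedSectionVars false

variable {g : Type*} [NormedAddCommGroup g] [InnerProductSpace ℝ g] [FiniteDimensional ℝ g]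

theorem norm_pow_le_clm (A : g →L[ℝ] g) (n : ℕ) : ‖A ^ n‖ ≤ ‖A‖ ^ n := by
  induction n with
  | zero => rw [pow_zero, pow_zero]; exact ContinuousLinearMap.norm_id_le
  | succ n ih =>
    rw [pow_succ, pow_succ]
    exact (norm_mul_le _ _).trans (by gcongr)

theorem summable_norm_ev {c : ℕ → ℝ} {A : g →L[ℝ] g} (h : Summable fun n => |c n| * ‖A‖ ^ n) :
    Summable fun n => ‖c n • A ^ n‖ :=
  h.of_nonneg_of_le (fun _ => norm_nonneg _) fun n => by
    rw [norm_smul, Real.norm_eq_abs]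
    gcongr
    exact norm_pow_le_clm A n

theorem ev_mul (p q : PowerSeries ℝ) (A : g →L[ℝ] g)
    (hp : Summable fun n => |PowerSeries.coeff n p| * ‖A‖ ^ n)
    (hq : Summable fun n => |PowerSeries.coeff n q| * ‖A‖ ^ n) :
    (∑' n, PowerSeries.coeff n p • A ^ n) * (∑' n, PowerSeries.coeff n q • A ^ n)
      = ∑' n, PowerSeries.coeff n (p * q) • A ^ n := by
  rw [tsum_mul_tsum_eq_tsum_sum_antidiagonal_of_summable_norm (summable_norm_ev hp)
    (summable_norm_ev hq)]
  congr 1; ext1 n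
  rw [PowerSeries.coeff_mul, Finset.sum_smul]
  refine Finset.sum_congr rfl fun x hx => ?_
  rw [smul_mul_smul_comm, ← pow_add, Finset.HasAntidiagonal.mem_antidiagonal.1 hx]

theorem hasSum_apply_of_bounded {V W : Type*} [NormedAddCommGroup V] [NormedSpace ℝ V]
    [NormedAddCommGroup W] [NormedSpace ℝ W] [CompleteSpace W] (f : ℕ → V →L[ℝ] W) (u : ℕ → ℝ)
    (hu : Summable u) (hb : ∀ n, ‖f n‖ ≤ u n) (H : V) :
    HasSum (fun n => f n H) ((∑' n, f n) H) := by
  have hs : Summable f := Summable.of_norm_bounded hu hb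
  exact (ContinuousLinearMap.apply ℝ W H).hasSum hs.hasSum

theorem hasFDerivAt_ev (c : ℕ → ℝ) (hc : ∀ R : ℝ, 0 ≤ R → Summable fun n => |c n| * R ^ n)
    (hc' : ∀ R : ℝ, 0 ≤ R → Summable fun n => |c n| * (n * R ^ (n - 1))) (A : g →L[ℝ] g) :
    ∃ F' : (g →L[ℝ] g) →L[ℝ] (g →L[ℝ] g),
      HasFDerivAt (fun A : g →L[ℝ] g => ∑' n, c n • A ^ n) F' A ∧
      ∀ H, HasSum (fun n => c n • ∑ i ∈ Finset.range n, A ^ (n.pred - i) * H * A ^ i) (F' H) := by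
  set D : ℕ → (g →L[ℝ] g) → ((g →L[ℝ] g) →L[ℝ] (g →L[ℝ] g)) := fun n A =>
    c n • fderiv ℝ (fun x : g →L[ℝ] g => x ^ n) A with hD
  have hDapp : ∀ n A H, D n A H = c n • ∑ i ∈ Finset.range n, A ^ (n.pred - i) * H * A ^ i := by
    intro n A H
    simp only [hD]
    rw [(hasFDerivAt_pow' (𝕜 := ℝ) n (x := A)).fderiv]
    simp [mul_assoc]
  set R := ‖A‖ + 1 with hR
  have hb : ∀ n, ∀ x ∈ Metric.ball (0 : g →L[ℝ] g) R, ‖D n x‖ ≤ |c n| * (n * R ^ (n - 1)) := by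
    intro n x hx
    have hx : ‖x‖ ≤ R := by simpa using (Metric.mem_ball.1 hx).le
    have hR0 : 0 ≤ R := by positivity
    refine ContinuousLinearMap.opNorm_le_bound _ (by positivity) fun H => ?_
    rw [hDapp, norm_smul, Real.norm_eq_abs, mul_assoc]
    gcongr
    refine (norm_sum_le _ _).trans ?_
    calc _ ≤ ∑ i ∈ Finset.range n, R ^ (n - 1) * ‖H‖ := by
          refine Finset.sum_le_sum fun i hi => ?_
          have hi := Finset.mem_range.1 hi
          calc _ ≤ ‖x ^ (n.pred - i)‖ * ‖H‖ * ‖x ^ i‖ :=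
                (norm_mul_le _ _).trans (by gcongr; exact norm_mul_le _ _)
            _ ≤ R ^ (n.pred - i) * ‖H‖ * R ^ i := by
                gcongr
                · exact (norm_pow_le_clm _ _).trans (by gcongr)
                · exact (norm_pow_le_clm _ _).trans (by gcongr)
            _ = R ^ (n.pred - i + i) * ‖H‖ := by rw [pow_add]; ring
            _ = _ := by congr 2; simp; omega
      _ = _ := by simp; ring
  have hAm : A ∈ Metric.ball (0 : g →L[ℝ] g) R := by simp [hR]
  refine ⟨∑' n, D n A, ?_, ?_⟩
  · refine hasFDerivAt_tsum_of_isPreconnected (hc' R (by positivity)) Metric.isOpen_ball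
      (convex_ball _ _).isPreconnected (fun n x _ => ?_) hb hAm ?_ hAm
    · have h1 : HasFDerivAt (fun x : g →L[ℝ] g => x ^ n)
          (fderiv ℝ (fun x : g →L[ℝ] g => x ^ n) x) x :=
        (differentiableAt_pow (𝕜 := ℝ) n).hasFDerivAt
      exact h1.fun_const_smul (c n)
    · exact (summable_norm_ev (hc ‖A‖ (norm_nonneg _))).of_norm
  · intro H
    have := hasSum_apply_of_bounded (fun n => D n A) _ (hc' R (by positivity))
      (fun n => hb n A hAm) H
    simp only [hDapp] at this
    exact this

/-- the continuous linear functional `X ↦ tr X` -/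
noncomputable def trL (g : Type*) [NormedAddCommGroup g] [InnerProductSpace ℝ g]
    [FiniteDimensional ℝ g] : (g →L[ℝ] g) →L[ℝ] ℝ :=
  LinearMap.toContinuousLinearMap
    ((LinearMap.trace ℝ g).comp (ContinuousLinearMap.coeLM ℝ))

theorem trL_apply (X : g →L[ℝ] g) : trL g X = LinearMap.trace ℝ g X.toLinearMap := rfl

theorem trL_mul_comm (X Y : g →L[ℝ] g) : trL g (X * Y) = trL g (Y * X) := by
  rw [trL_apply, trL_apply]
  exact LinearMap.trace_mul_comm ℝ X.toLinearMap Y.toLinearMap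

theorem trL_eq_sum {n : ℕ} (e : OrthonormalBasis (Fin n) ℝ g) (X : g →L[ℝ] g) :
    trL g X = ∑ i, ⟪e i, X (e i)⟫ := by
  rw [trL_apply, LinearMap.trace_eq_sum_inner _ e]; rfl

theorem differentiable_det : Differentiable ℝ (fun X : g →L[ℝ] g => LinearMap.det X.toLinearMap) := by
  let b := Module.finBasis ℝ g
  have : (fun X : g →L[ℝ] g => LinearMap.det X.toLinearMap) =
      fun X : g →L[ℝ] g => ∑ σ : Equiv.Perm (Fin (Module.finrank ℝ g)),
        (Equiv.Perm.sign σ : ℤ) * ∏ i, b.repr (X (b i)) (σ i) := by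
    ext X
    rw [← LinearMap.det_toMatrix b, Matrix.det_apply']
    simp [LinearMap.toMatrix_apply]
  rw [this]
  refine Differentiable.fun_sum fun σ _ => Differentiable.const_mul ?_ _
  have hi : ∀ i, Differentiable ℝ (fun X : g →L[ℝ] g => b.repr (X (b i)) (σ i)) := fun i => ?_
  · intro X
    exact (HasFDerivAt.finsetProd (u := Finset.univ)
      (g := fun i (X : g →L[ℝ] g) => b.repr (X (b i)) (σ i))
      fun i _ => (hi i X).hasFDerivAt).differentiableAt
  let l : (g →L[ℝ] g) →ₗ[ℝ] ℝ := (b.coord (σ i)).comp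
    ((LinearMap.applyₗ (b i)).comp (ContinuousLinearMap.coeLM ℝ))
  exact (LinearMap.toContinuousLinearMap l).differentiable

theorem fderiv_det (X Y N : g →L[ℝ] g) (hXY : X * Y = 1) :
    fderiv ℝ (fun X : g →L[ℝ] g => LinearMap.det X.toLinearMap) X N =
      LinearMap.det X.toLinearMap * trL g (Y * N) := by
  have h1 : HasDerivAt (fun t : ℝ => LinearMap.det (X + t • N).toLinearMap)
      (fderiv ℝ (fun X : g →L[ℝ] g => LinearMap.det X.toLinearMap) X N) 0 := by
    have := (differentiable_det (g := g) X).hasFDerivAt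
    have hl : HasDerivAt (fun t : ℝ => X + t • N) N 0 := by
      simpa using ((hasDerivAt_id (0:ℝ)).smul_const N).const_add X
    have h0 : X = X + (0:ℝ) • N := by simp
    rw [h0] at this
    have h2 := this.comp_hasDerivAt (0:ℝ) hl
    have h3 : X + (0:ℝ) • N = X := by simp
    rw [h3] at h2
    exact h2
  let b := Module.finBasis ℝ g
  set M := LinearMap.toMatrix b b (Y * N).toLinearMap with hM
  have h2 : HasDerivAt (fun t : ℝ => LinearMap.det (X + t • N).toLinearMap)
      (LinearMap.det X.toLinearMap * trL g (Y * N)) 0 := by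
    have e1 : (fun t : ℝ => LinearMap.det (X + t • N).toLinearMap) = fun t : ℝ =>
        LinearMap.det X.toLinearMap *
          (Matrix.det (1 + (Polynomial.X : Polynomial ℝ) • M.map Polynomial.C)).eval t := by
      ext t
      have : X + t • N = X * (1 + t • (Y * N)) := by
        rw [mul_add, mul_one, mul_smul_comm, ← mul_assoc, hXY, one_mul]
      rw [this]
      have : (X * (1 + t • (Y * N))).toLinearMap = X.toLinearMap * (1 + t • (Y * N)).toLinearMap := rfl
      rw [this, map_mul]
      congr 1
      rw [← LinearMap.det_toMatrix b]
      have : LinearMap.toMatrix b b (1 + t • (Y * N)).toLinearMap = 1 + t • M := by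
        rw [hM, ← LinearMap.toMatrix_one b, ← map_smul, ← map_add]; rfl
      rw [this]
      simp [eval_det, ← Matrix.smul_eq_mul_diagonal]
    rw [e1]
    refine HasDerivAt.const_mul _ ?_
    have := (Matrix.det (1 + (Polynomial.X : Polynomial ℝ) • M.map Polynomial.C)).hasDerivAt 0
    rw [Matrix.derivative_det_one_add_X_smul] at this
    rw [trL_apply, LinearMap.trace_eq_matrix_trace ℝ b]
    exact this
  exact h1.unique h2

theorem trL_sum_term (A K H : g →L[ℝ] g) (hK : Commute A K) (n : ℕ) (c : ℝ) :
    trL g (K * (c • ∑ i ∈ Finset.range n, A ^ (n.pred - i) * H * A ^ i))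
      = c * (n * trL g (K * A ^ (n - 1) * H)) := by
  rw [mul_smul_comm, map_smul, smul_eq_mul, Finset.mul_sum, map_sum]
  congr 1
  rw [Finset.sum_congr rfl (g := fun _ => trL g (K * A ^ (n - 1) * H))]
  · simp
  · intro i hi
    have hi := Finset.mem_range.1 hi
    have h1 : K * (A ^ (n.pred - i) * H * A ^ i) = (K * A ^ (n.pred - i) * H) * A ^ i := by
      simp only [mul_assoc]
    rw [h1, trL_mul_comm]
    congr 1
    rw [← mul_assoc, ← mul_assoc, (hK.pow_left i).eq, mul_assoc K, ← pow_add]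
    congr 3
    simp only [Nat.pred_eq_sub_one]; omega

theorem trace_deriv (c : ℕ → ℝ) (A K H FH : g →L[ℝ] g) (hK : Commute A K)
    (hF : HasSum (fun n => c n • ∑ i ∈ Finset.range n, A ^ (n.pred - i) * H * A ^ i) FH)
    (hd : Summable fun n : ℕ => (c (n + 1) * (n + 1)) • A ^ n) :
    trL g (K * FH) = trL g (K * (∑' n : ℕ, (c (n + 1) * (n + 1)) • A ^ n) * H) := by
  have h1 := (trL g).hasSum (hF.mul_left K)
  have h2 := (trL g).hasSum ((hd.hasSum.mul_left K).mul_right H)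
  simp only [trL_sum_term A K H hK] at h1
  rw [← hasSum_nat_add_iff' 1] at h1
  simp only [Finset.sum_range_one, Nat.cast_zero, zero_mul, mul_zero, sub_zero] at h1
  refine h1.unique ?_
  refine hasSum_of_eq (fun n => ?_) h2
  rw [mul_smul_comm, smul_mul_assoc, map_smul]
  simp only [Nat.cast_add, Nat.cast_one, add_tsub_cancel_right, smul_eq_mul]
  ring

theorem summable_c (R : ℝ) (hR : 0 ≤ R) :
    Summable fun n : ℕ => |(-1) ^ n * (((n + 1).factorial : ℝ))⁻¹| * R ^ n := by
  refine (Real.summable_pow_div_factorial R).of_nonneg_of_le (fun _ => by positivity) fun n => ?_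
  rw [abs_mul, abs_pow, abs_neg, abs_one, one_pow, one_mul, abs_of_pos (by positivity), mul_comm,
    div_eq_mul_inv]
  gcongr
  omega

theorem summable_c_succ (R : ℝ) (hR : 0 ≤ R) : Summable fun n : ℕ =>
    |(-1) ^ (n + 1) * (((n + 1 + 1).factorial : ℝ))⁻¹ * (n + 1)| * R ^ n := by
  refine (Real.summable_pow_div_factorial R).of_nonneg_of_le (fun _ => by positivity) fun n => ?_
  rw [abs_mul, abs_mul, abs_pow, abs_neg, abs_one, one_pow, one_mul, abs_of_pos (by positivity),
    abs_of_pos (by positivity), mul_comm, div_eq_mul_inv]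
  gcongr
  rw [Nat.factorial_succ, Nat.factorial_succ]
  push_cast
  have : (0:ℝ) < n.factorial := by positivity
  field_simp
  linarith

theorem summable_c' (R : ℝ) (hR : 0 ≤ R) :
    Summable fun n : ℕ => |(-1) ^ n * (((n + 1).factorial : ℝ))⁻¹| * (n * R ^ (n - 1)) := by
  rw [← summable_nat_add_iff 1]
  refine (summable_c_succ R hR).congr fun n => ?_
  rw [abs_mul _ ((n:ℝ) + 1), abs_of_pos (show (0:ℝ) < n + 1 by positivity)]
  push_cast
  ring_nf

theorem summable_bern {r : ℝ} (h0 : 0 ≤ r) (hr : r < 2 * Real.pi) (c : ℕ → ℝ) (C : ℝ)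
    (hc : ∀ n, |c n| ≤ C / (2 * Real.pi) ^ n) : Summable fun n => |c n| * r ^ n := by
  have hpi := Real.pi_pos
  have : Summable fun n : ℕ => C * (r / (2 * Real.pi)) ^ n :=
    (summable_geometric_of_lt_one (by positivity) ((div_lt_one (by positivity)).2 hr)).mul_left C
  refine this.of_nonneg_of_le (fun _ => by positivity) fun n => ?_
  calc _ ≤ C / (2 * Real.pi) ^ n * r ^ n := by gcongr; exact hc n
    _ = _ := by rw [div_pow]; ring

theorem key (A : g →L[ℝ] g) (hA : ‖A‖ < 2 * Real.pi) :
    ∃ K : g →L[ℝ] g,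
      (∑' n : ℕ, ((-1) ^ n * (((n + 1).factorial : ℝ))⁻¹) • A ^ n) * K = 1 ∧
      ∀ H FH : g →L[ℝ] g, HasSum (fun n : ℕ => ((-1) ^ n * (((n + 1).factorial : ℝ))⁻¹) •
        ∑ i ∈ Finset.range n, A ^ (n.pred - i) * H * A ^ i) FH → trL g H = 0 →
      HasSum (fun k : ℕ => (((bernoulli (2 * (k + 1)) : ℚ) : ℝ) / ((2 * (k + 1)).factorial : ℝ)) *
        trL g (A ^ (2 * (k + 1) - 1) * H)) (trL g (K * FH)) := by
  obtain ⟨Φ, β, Ψ, hΦ, hβ, hΨ, h1, h2⟩ := ps_identities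
  have hpi := Real.pi_pos
  have sΦ : Summable fun n => |PowerSeries.coeff n Φ| * ‖A‖ ^ n := by
    simp only [hΦ]; exact summable_c _ (norm_nonneg _)
  have hD : ∀ n : ℕ, PowerSeries.coeff n (PowerSeries.derivative ℝ Φ) =
      (-1) ^ (n + 1) * (((n + 1 + 1).factorial : ℝ))⁻¹ * (n + 1) := by
    intro n; rw [PowerSeries.coeff_derivative, hΦ]
  have sD : Summable fun n => |PowerSeries.coeff n (PowerSeries.derivative ℝ Φ)| * ‖A‖ ^ n := by
    simp only [hD]; exact summable_c_succ _ (norm_nonneg _)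
  have sβ : Summable fun n => |PowerSeries.coeff n β| * ‖A‖ ^ n := by
    refine summable_bern (norm_nonneg _) hA _ 4 fun n => ?_
    refine le_trans (le_of_eq ?_) (bern_bound n)
    rw [hβ, bernoulli'_eq_bernoulli]
    simp [abs_div, abs_mul]
  have sΨ : Summable fun n => |PowerSeries.coeff n Ψ| * ‖A‖ ^ n := by
    refine summable_bern (norm_nonneg _) hA _ (4 / (2 * Real.pi)) fun n => ?_
    refine le_trans (le_of_eq ?_) ((bern_bound (n + 1)).trans (le_of_eq ?_))
    · rw [hΨ]
    · rw [pow_succ]; field_simp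
  have m1 := ev_mul _ _ A sΦ sβ
  have m2 := ev_mul _ _ A sβ sD
  rw [h1] at m1
  rw [mul_comm β, h2] at m2
  have e1 : (∑' n, PowerSeries.coeff n (1 : PowerSeries ℝ) • A ^ n) = 1 := by
    rw [tsum_eq_single 0]
    · simp
    · intro n hn; simp [PowerSeries.coeff_one, hn]
  rw [e1] at m1
  set K := ∑' n, PowerSeries.coeff n β • A ^ n with hK
  have hcomm : Commute A K := Commute.tsum_right _ fun n => ((Commute.refl A).pow_right n).smul_right _
  refine ⟨K, ?_, fun H FH hF hH => ?_⟩
  · simpa only [hΦ] using m1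
  have hd : Summable fun n : ℕ => ((-1) ^ (n + 1) * (((n + 1 + 1).factorial : ℝ))⁻¹ * (n + 1)) • A ^ n := by
    have := (summable_norm_ev sD).of_norm
    simpa only [hD] using this
  have ht := trace_deriv (fun n : ℕ => (-1) ^ n * (((n + 1).factorial : ℝ))⁻¹) A K H FH hcomm hF hd
  simp only [hD] at m2
  rw [m2] at ht
  rw [ht]
  have hs := (trL g).hasSum ((summable_norm_ev sΨ).of_norm.hasSum.mul_right H)
  have hodd : Function.Injective (fun k : ℕ => 2 * k + 1) := fun a b h => by simpa using h
  rw [← hodd.hasSum_iff] at hs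
  · convert hs using 1
    ext k
    simp only [Function.comp, smul_mul_assoc, map_smul, smul_eq_mul, hΨ]
    rfl
  · intro n hn
    rw [smul_mul_assoc, map_smul, smul_eq_mul, hΨ]
    rcases Nat.even_or_odd n with h | h
    · rcases Nat.eq_zero_or_pos n with rfl | hp
      · simp [hH]
      · rw [bernoulli_eq_zero_of_odd h.add_one (by omega)]; simp
    · obtain ⟨k, rfl⟩ := h
      exact absurd ⟨k, rfl⟩ hn

theorem summable_entry (A : g →L[ℝ] g) (hA : ‖A‖ < 2 * Real.pi) (u v : g) :
    Summable fun k : ℕ => (((bernoulli (2 * (k + 1)) : ℚ) : ℝ) / ((2 * (k + 1)).factorial : ℝ)) *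
        ⟪u, (A ^ (2 * (k + 1) - 1)) v⟫ := by
  have hpi := Real.pi_pos
  have s1 : Summable fun n : ℕ =>
      |((bernoulli (n + 1) : ℚ) : ℝ) / ((n + 1).factorial : ℝ)| * ‖A‖ ^ n := by
    refine summable_bern (norm_nonneg _) hA _ (4 / (2 * Real.pi)) fun n => ?_
    refine (bern_bound (n + 1)).trans (le_of_eq ?_)
    rw [pow_succ]; field_simp
  have s2 := (s1.mul_right (‖u‖ * ‖v‖)).comp_injective
    (i := fun k : ℕ => 2 * k + 1) (fun a b h => by simpa using h)
  refine Summable.of_norm_bounded s2 fun k => ?_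
  have hk : 2 * (k + 1) - 1 = 2 * k + 1 := by omega
  have hk2 : 2 * (k + 1) = 2 * k + 1 + 1 := by omega
  rw [hk, hk2, norm_mul, Real.norm_eq_abs]
  simp only [Function.comp, mul_assoc]
  gcongr
  calc ‖⟪u, (A ^ (2 * k + 1)) v⟫‖ ≤ ‖u‖ * ‖(A ^ (2 * k + 1)) v‖ := norm_inner_le_norm _ _
    _ ≤ ‖u‖ * (‖A‖ ^ (2 * k + 1) * ‖v‖) := by
      gcongr
      exact ((A ^ (2 * k + 1)).le_opNorm v).trans (by gcongr; exact norm_pow_le_clm _ _)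
    _ = _ := by ring

end JacAux



/-- The Jacobian `J(μ) = det((1 − e^{−ad_μ})/ad_μ)` of the exponential map
is differentiable, and for `‖ad_μ‖ < 2π` its logarithmic derivative in the direction `e_a` is
`∑_{b,c} f_{abc} S_{bc}(μ)`, where `S_{bc}(μ) = ∑_{k≥1} (B_{2k}/(2k)!)⟨e_b, ad_μ^{2k−1} e_c⟩`
(`= −T_{bc}(μ)`): that is, `(DJ)_μ(e_a) = J(μ)·∑_{b,c} f_{abc} S_{bc}(μ)`. -/
theorem jacobian_derivative
    {n : ℕ} {g : Type*} [NormedAddCommGroup g] [InnerProductSpace ℝ g]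
    [FiniteDimensional ℝ g]
    -- the Lie bracket, as a bilinear map
    (br : g →ₗ[ℝ] g →ₗ[ℝ] g)
    (br_alt : ∀ v : g, br v v = 0)
    (br_jacobi : ∀ u v w : g, br u (br v w) = br (br u v) w + br v (br u w))
    -- ad-invariance of the inner product
    (br_inv : ∀ u v w : g, ⟪br u v, w⟫ + ⟪v, br u w⟫ = 0)
    -- an orthonormal basis
    (e : OrthonormalBasis (Fin n) ℝ g)
    -- structure constants
    (f : Fin n → Fin n → Fin n → ℝ)
    (hf : ∀ a b c, f a b c = ⟪br (e a) (e b), e c⟫)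
    -- ad_μ as a continuous linear operator
    (ad : g → g →L[ℝ] g)
    (had : ∀ μ v, ad μ v = br μ v)
    -- the entire function (1 − e^{−ad_μ}) ∘ ad_μ⁻¹ = ∑_{m≥0} (−ad_μ)^m/(m+1)!
    (L : g → g →L[ℝ] g)
    (hL : ∀ μ, L μ = ∑' m : ℕ, (((m + 1).factorial : ℝ))⁻¹ • (-ad μ) ^ m)
    -- the Jacobian of the exponential map
    (J : g → ℝ)
    (hJ : ∀ μ, J μ = LinearMap.det ((L μ).toLinearMap))
    -- the series S_{bc}(μ) = ∑_{k≥1} (B_{2k}/(2k)!) ⟨e_b, ad_μ^{2k−1} e_c⟩ = −T_{bc}(μ)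
    (S : Fin n → Fin n → g → ℝ)
    (hS : ∀ b c μ, S b c μ = ∑' k : ℕ,
      (((bernoulli (2 * (k + 1)) : ℚ) : ℝ) / ((2 * (k + 1)).factorial : ℝ)) *
        ⟪e b, (ad μ ^ (2 * (k + 1) - 1)) (e c)⟫) :
    Differentiable ℝ J ∧
    ∀ μ : g, ‖ad μ‖ < 2 * Real.pi → ∀ a,
      fderiv ℝ J μ (e a) = J μ * ∑ b, ∑ c, f a b c * S b c μ := by
  let adl : g →ₗ[ℝ] (g →L[ℝ] g) :=
    { toFun := ad
      map_add' := fun u v => by ext w; simp [had]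
      map_smul' := fun c u => by ext w; simp [had] }
  let adL : g →L[ℝ] (g →L[ℝ] g) := LinearMap.toContinuousLinearMap adl
  have hadL : ∀ μ, adL μ = ad μ := fun μ => rfl
  let F : (g →L[ℝ] g) → (g →L[ℝ] g) := fun A =>
    ∑' n : ℕ, ((-1) ^ n * (((n + 1).factorial : ℝ))⁻¹) • A ^ n
  have hLF : ∀ μ, L μ = F (ad μ) := by
    intro μ
    rw [hL]
    refine tsum_congr fun m => ?_
    rcases Nat.even_or_odd m with h | h
    · simp [h.neg_pow]
    · simp [h.neg_pow]
  have hJ' : J = fun μ => LinearMap.det (F (adL μ)).toLinearMap := by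
    ext μ; rw [hJ, hLF]; rfl
  have hFd := JacAux.hasFDerivAt_ev (g := g) (fun n : ℕ => (-1) ^ n * (((n + 1).factorial : ℝ))⁻¹)
    JacAux.summable_c JacAux.summable_c'
  have hder : ∀ μ, ∃ F' : (g →L[ℝ] g) →L[ℝ] (g →L[ℝ] g),
      HasFDerivAt J ((fderiv ℝ (fun X : g →L[ℝ] g => LinearMap.det X.toLinearMap) (F (ad μ))).comp
        (F'.comp adL)) μ ∧ ∀ H, HasSum (fun n : ℕ => ((-1) ^ n * (((n + 1).factorial : ℝ))⁻¹) •
          ∑ i ∈ Finset.range n, (ad μ) ^ (n.pred - i) * H * (ad μ) ^ i) (F' H) := by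
    intro μ
    obtain ⟨F', h1, h2⟩ := hFd (ad μ)
    refine ⟨F', ?_, h2⟩
    have h3 : HasFDerivAt F F' (adL μ) := h1
    have h4 := h3.comp μ adL.hasFDerivAt
    have h5 := (JacAux.differentiable_det (g := g) (F (adL μ))).hasFDerivAt
    have h6 := HasFDerivAt.comp μ (f := fun μ => F (adL μ)) h5 h4
    rw [hJ']
    exact h6
  refine ⟨fun μ => (hder μ).choose_spec.1.differentiableAt, fun μ hμ a => ?_⟩
  obtain ⟨F', h1, h2⟩ := hder μ
  obtain ⟨K, hK1, hK2⟩ := JacAux.key (ad μ) hμ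
  have htr : JacAux.trL g (ad (e a)) = 0 := by
    rw [JacAux.trL_eq_sum e]
    refine Finset.sum_eq_zero fun i _ => ?_
    have := br_inv (e a) (e i) (e i)
    rw [real_inner_comm] at this
    rw [had]; linarith
  have hsum := hK2 (ad (e a)) _ (h2 (ad (e a))) htr
  rw [h1.fderiv]
  have e1 : ((fderiv ℝ (fun X : g →L[ℝ] g => LinearMap.det X.toLinearMap) (F (ad μ))).comp
        (F'.comp adL)) (e a) = fderiv ℝ (fun X : g →L[ℝ] g => LinearMap.det X.toLinearMap)
          (F (ad μ)) (F' (ad (e a))) := rfl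
  rw [e1, JacAux.fderiv_det _ K _ hK1, hJ, hLF]
  congr 1
  have hterm : ∀ j : ℕ, JacAux.trL g (ad μ ^ j * ad (e a)) =
      ∑ b, ∑ c, f a b c * ⟪e b, (ad μ ^ j) (e c)⟫ := by
    intro j
    rw [JacAux.trL_eq_sum e]
    refine Finset.sum_congr rfl fun b _ => ?_
    have : ad (e a) (e b) = ∑ c, f a b c • e c := by
      rw [had, ← e.sum_repr' (br (e a) (e b))]
      refine Finset.sum_congr rfl fun c _ => ?_
      rw [hf, real_inner_comm]
    have h3 : (ad μ ^ j * ad (e a)) (e b) = (ad μ ^ j) (ad (e a) (e b)) := rfl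
    rw [h3, this, map_sum, inner_sum]
    refine Finset.sum_congr rfl fun c _ => ?_
    rw [map_smul, real_inner_smul_right]
  have hSs : ∀ b c, HasSum (fun k : ℕ =>
      (((bernoulli (2 * (k + 1)) : ℚ) : ℝ) / ((2 * (k + 1)).factorial : ℝ)) *
        ⟪e b, (ad μ ^ (2 * (k + 1) - 1)) (e c)⟫) (S b c μ) := by
    intro b c
    rw [hS]
    exact (JacAux.summable_entry (ad μ) hμ (e b) (e c)).hasSum
  have hfin := hasSum_sum (s := Finset.univ) fun b _ =>
    hasSum_sum (s := Finset.univ) fun c _ => (hSs b c).mul_left (f a b c)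
  refine hsum.unique ?_
  refine JacAux.hasSum_of_eq (fun k => ?_) hfin
  rw [hterm, Finset.mul_sum]
  refine Finset.sum_congr rfl fun b _ => ?_
  rw [Finset.mul_sum]
  refine Finset.sum_congr rfl fun c _ => ?_
  ring
end
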